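/- Let G be a finite group, M an abelian normal subgroup, and ψ ∈ Irr(G) with M not contained in ker(ψ). Let P be a subgroup with PM ≤ G, and suppose d = min{|P : I_P(λ)| : 1 ≠ λ ∈ Irr(M)} divides θ(1) for every θ ∈ Irr(PM) with M ⊄ ker(θ). Then d divides ψ(1). -/

import Mathlib

open CategoryTheory

/-- The inertia group `I_P(λ) ≤ P` of a character `λ` of a normal subgroup `M ⊴ G`,
under the conjugation action of a subgroup `P ≤ G`. -/
def inertiaIn {G : Type*} [Group G] (P M : Subgroup G) [hM : M.Normal] {k : Type*}
    (l : M → k) : Subgroup P where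
  carrier := {x | ∀ m : M, l ⟨(x : G) * m * (x : G)⁻¹, hM.conj_mem m.1 m.2 x⟩ = l m}
  one_mem' := by
    intro m
    congr 1
    ext
    simp
  mul_mem' := by
    intro a b ha hb m
    have h1 := ha ⟨(b : G) * m * (b : G)⁻¹, hM.conj_mem m.1 m.2 b⟩
    have h2 := hb m
    have key : (⟨((a * b : P) : G) * m * ((a * b : P) : G)⁻¹,
        hM.conj_mem m.1 m.2 (a * b)⟩ : M) =
        ⟨(a : G) * ((b : G) * m * (b : G)⁻¹) * (a : G)⁻¹,
        hM.conj_mem _ (hM.conj_mem m.1 m.2 b) a⟩ := by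
      ext
      push_cast
      group
    rw [key, h1, h2]
  inv_mem' := by
    intro a ha m
    have h1 := ha ⟨(a : G)⁻¹ * m * (a : G), by
      simpa using hM.conj_mem m.1 m.2 (a : G)⁻¹⟩
    convert h1.symm using 2 <;> ext <;> push_cast <;> (try simp) <;> group


lemma simple_of_irred {H : Type} [Group H] [Finite H] {U : Type} [AddCommGroup U] [Module ℂ U]
    [FiniteDimensional ℂ U] (ρ : Representation ℂ H U) (h : ρ.IsIrreducible) :
    Simple (FDRep.of ρ) := by
  have : Fintype H := Fintype.ofFinite H
  rw [FDRep.simple_iff_end_is_rank_one]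
  rw [← LinearEquiv.finrank_eq
    (Representation.linHom.invariantsEquivFDRepHom (FDRep.of ρ) (FDRep.of ρ))]
  have := Representation.IsIrreducible.finrank_intertwiningMap_self ρ
  rw [← this]
  exact LinearEquiv.finrank_eq (Representation.invariantsEquivIntertwiningMap ρ ρ)

lemma sub_of_simple {H : Type} [Group H] (V : FDRep ℂ H) (hV : Simple V)
    (S : Subrepresentation (A := ℂ) (G := H) (W := V) V.ρ) (hS : S.toSubmodule ≠ ⊥) :
    S.toSubmodule = ⊤ := by
  let f : FDRep.of S.toRepresentation ⟶ V :=
    ⟨InducedCategory.homMk (ModuleCat.ofHom S.toSubmodule.subtype), fun g ↦ by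
      ext1; rfl⟩
  have hinj : Function.Injective ((forget (FGModuleCat ℂ)).map f.hom) := Subtype.val_injective
  have hm : Mono f := by
    have h1 : Mono f.hom := ConcreteCategory.mono_of_injective f.hom hinj
    exact Functor.mono_of_mono_map (Action.forget (FGModuleCat ℂ) H) h1
  have hne : f ≠ 0 := by
    intro h0
    apply hS
    rw [Submodule.eq_bot_iff]
    intro x hx
    have h2 : ∀ y : S.toSubmodule, f.hom y = 0 := by rw [h0]; intro y; rfl
    exact h2 ⟨x, hx⟩
  have hi : IsIso f := isIso_of_mono_of_nonzero hne
  rw [Submodule.eq_top_iff']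
  intro x
  have := (FDRep.isoToLinearEquiv (asIso f)).surjective x
  obtain ⟨y, hy⟩ := this
  have : (y.1 : V) = x := hy
  rw [← this]; exact y.2

lemma fixed_dvd {H : Type} [Group H] [Finite H] (N : Subgroup H) (d : ℕ)
    (hdiv : ∀ W : FDRep ℂ H, Simple W → (∃ m ∈ N, W.character m ≠ W.character 1) →
      d ∣ Module.finrank ℂ W) (n : ℕ) :
    ∀ {U : Type} [AddCommGroup U] [Module ℂ U] [FiniteDimensional ℂ U]
      (ρ : Representation ℂ H U), (∀ u, (∀ m ∈ N, ρ m u = u) → u = 0) →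
      Module.finrank ℂ U = n → d ∣ n := by
  induction n using Nat.strong_induction_on with
  | _ n ih =>
  intro U _ _ _ ρ hfix hn
  by_cases h0 : n = 0
  · simp [h0]
  by_cases hirr : ρ.IsIrreducible
  · have := hdiv (FDRep.of ρ) (simple_of_irred ρ hirr)
    rw [← hn]
    apply this
    by_contra! hc
    have : Fintype N := Fintype.ofFinite N
    have hcard : (Nat.card N : ℂ) ≠ 0 := by exact_mod_cast Nat.card_pos.ne'
    have : Invertible (Nat.card N : ℂ) := invertibleOfNonzero hcard
    have key := Representation.card_inv_mul_sum_char_eq_finrank (ρ.comp N.subtype)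
    have hch : ∀ g : N, (Representation.character (ρ.comp N.subtype)) g = n := by
      intro g
      have h1 := hc g g.2
      rw [FDRep.char_one] at h1
      rw [← hn]
      exact h1
    have hbot : Representation.invariants (ρ.comp N.subtype) = ⊥ := by
      rw [Submodule.eq_bot_iff]
      intro u hu
      exact hfix u fun m hm => hu ⟨m, hm⟩
    rw [hbot] at key
    simp [hch] at key
    exact h0 key
  · have hnt : Nontrivial (Subrepresentation ρ) := by
      have : Nontrivial U := Module.nontrivial_of_finrank_pos (R := ℂ) (by omega)
      refine ⟨⊥, ⊤, fun h => ?_⟩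
      have h' := congrArg Subrepresentation.toSubmodule h
      exact bot_ne_top (α := Submodule ℂ U) h'
    have : ∃ S : Subrepresentation ρ, S ≠ ⊥ ∧ S ≠ ⊤ := by
      by_contra! hc
      exact hirr ⟨fun S => by by_cases h : S = ⊥ <;> simp_all⟩
    obtain ⟨S, hb, ht⟩ := this
    obtain ⟨T, hT⟩ := exists_isCompl S
    have hST : IsCompl S.toSubmodule T.toSubmodule := by
      constructor
      · rw [disjoint_iff]
        exact congrArg Subrepresentation.toSubmodule hT.inf_eq_bot
      · rw [codisjoint_iff]
        exact congrArg Subrepresentation.toSubmodule hT.sup_eq_top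
    have hsum := Submodule.finrank_add_eq_of_isCompl hST
    have hS0 : Module.finrank ℂ S.toSubmodule ≠ 0 := by
      intro h
      exact hb (Subrepresentation.toSubmodule_injective (Submodule.finrank_eq_zero.mp h))
    have hT0 : Module.finrank ℂ T.toSubmodule ≠ 0 := by
      intro h
      rw [h, add_zero] at hsum
      exact ht (Subrepresentation.toSubmodule_injective (Submodule.eq_top_of_finrank_eq hsum))
    have aux : ∀ R : Subrepresentation ρ, Module.finrank ℂ R.toSubmodule < n →
        d ∣ Module.finrank ℂ R.toSubmodule := by
      intro R hR
      refine ih _ hR R.toRepresentation ?_ rfl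
      intro u hu
      exact Subtype.ext (hfix u fun m hm => congrArg Subtype.val (hu m hm))
    rw [← hn, ← hsum]
    exact dvd_add (aux S (by omega)) (aux T (by omega))

/-- Let `M ⊴ G` be abelian, `ψ ∈ Irr(G)` with `M ⊄ ker ψ`, and `P ≤ G`.
Suppose `d = min { |P : I_P(λ)| : 1 ≠ λ ∈ Irr(M) }` divides `θ(1)` for every
`θ ∈ Irr(PM)` with `M ⊄ ker θ`.  Then `d` divides `ψ(1)`. -/
theorem min_inertia_index_divides_degree
    {G : Type} [Group G] [Fintype G] (M : Subgroup G) [M.Normal]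
    (hMab : ∀ a ∈ M, ∀ b ∈ M, a * b = b * a)
    (P : Subgroup G)
    (V : FDRep ℂ G) (hV : Simple V)
    (hker : ∃ m ∈ M, V.character m ≠ V.character 1)
    (d : ℕ)
    (hd : d = sInf {c : ℕ | ∃ l : M →* ℂ, (∃ m : M, l m ≠ 1) ∧
      c = (inertiaIn P M (⇑l)).index})
    (hdiv : ∀ W : FDRep ℂ ((P ⊔ M : Subgroup G)), Simple W →
      (∃ m : G, ∃ hm : m ∈ M,
        W.character ⟨m, (le_sup_right : M ≤ P ⊔ M) hm⟩ ≠ W.character 1) →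
      d ∣ Module.finrank ℂ W) :
    d ∣ Module.finrank ℂ V := by
  obtain ⟨m₀, hm₀, hne⟩ := hker
  let ρ : Representation ℂ G V := V.ρ
  let S : Subrepresentation ρ :=
    { toSubmodule :=
        { carrier := {v | ∀ m ∈ M, ρ m v = v}
          zero_mem' := fun m _ => map_zero _
          add_mem' := fun {a b} ha hb m hm => by rw [map_add, ha m hm, hb m hm]
          smul_mem' := fun c v hv m hm => by rw [map_smul, hv m hm] }
      apply_mem_toSubmodule := fun g v hv m hm => by
        have h1 : g⁻¹ * m * g ∈ M := by
          simpa using Subgroup.Normal.conj_mem inferInstance m hm g⁻¹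
        have h2 := hv _ h1
        have h3 : m * g = g * (g⁻¹ * m * g) := by group
        rw [← Module.End.mul_apply, ← map_mul, h3, map_mul, Module.End.mul_apply, h2] }
  have hbot : S.toSubmodule = ⊥ := by
    by_contra hS
    have htop := sub_of_simple V hV S hS
    apply hne
    have : ρ m₀ = ρ 1 := by
      ext v
      have hv : v ∈ S.toSubmodule := by rw [htop]; trivial
      rw [map_one]
      exact hv m₀ hm₀
    exact congrArg (LinearMap.trace ℂ V) this
  refine fixed_dvd (M.subgroupOf (P ⊔ M)) d ?_ _ (ρ.comp (P ⊔ M).subtype) ?_ rfl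
  · rintro W hW ⟨m, hm, hc⟩
    exact hdiv W hW ⟨m, hm, hc⟩
  · intro u hu
    have : u ∈ S.toSubmodule := fun m hm =>
      hu ⟨m, (le_sup_right : M ≤ P ⊔ M) hm⟩ hm
    rw [hbot] at this
    exact this
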